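/- For every integer d ≥ 1 there exists a constant K = K(d) > 0 with the following property. Let Z = (z_1, …, z_n) be a stationary non-overlapping configuration of n entities of radius ρ ≥ 0 in ℝ^d with pairwise distinct centers, let 1 ≤ x < y ≤ n−1 be integers, assume σ_i(y) > 0 for all i, and set H := Σ_{i=1}^n 1/r_i(y). Let T be a bounded time interval of length |T| with |T|·H ≥ 2n. Then every query schedule whose uncertainty ply is at most x at every time of T makes at least ((y − x + 1)/(K·y))·|T|·H queries during T. -/

import Mathlib

open Metric Set
open scoped ENNReal

/-- The `x`-separation of entity `i` in the configuration `z` of entities of radius `ρ`: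
the `x`-th smallest value of `dist (z i) (z j) - 2ρ` over `j ≠ i`. -/
noncomputable def xSep {d n : ℕ} (ρ : ℝ) (z : Fin n → EuclideanSpace ℝ (Fin d))
    (x : ℕ) (i : Fin n) : ℝ :=
  sInf {r : ℝ | x ≤ {j : Fin n | j ≠ i ∧ dist (z i) (z j) - 2 * ρ ≤ r}.ncard}

open Classical in
/-- The uncertainty region at time `t` of a stationary entity of radius `ρ` centered at `z`
with query-time set `Q`: the closed ball about `z` of radius `ρ + (t - p(t))` where `p(t)` is
the last query time at or before `t`, and all of space if there is no query time before `t`. -/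
noncomputable def uRegion {d : ℕ} (ρ : ℝ) (z : EuclideanSpace ℝ (Fin d))
    (Q : Set ℝ) (t : ℝ) : Set (EuclideanSpace ℝ (Fin d)) :=
  if (Q ∩ Set.Iic t).Nonempty then
    closedBall z (ρ + (t - sSup (Q ∩ Set.Iic t)))
  else Set.univ

/-!
Fix an entity `i` with `y`-radius `r i`, and call the entities within separation `σ i` of `i`,
including `i` itself, its neighbours; there are at least `y + 1` of them. A neighbour not queried
during `(t - r i, t]` has an uncertainty region containing `z i` at time `t`, so at most `x`
neighbours are unqueried: every time window of length `r i` contains queries to at least `y + 1 - x`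
neighbours of `i`. Cutting `[a, b]` into `⌊(b - a) / r i⌋` such windows bounds from below the number
of queries to neighbours of `i`. Summing over `i` counts each query with a multiplicity at most
proportional to `y`: if `j` is a neighbour of several entities lying in a common narrow cone with
apex `z j`, the farthest of these is strictly closer to the others than to `z j`, so by definition
of the `y`-separation there are at most `y` of them, and boundedly many cones cover the space.
-/

open scoped Finset

section OrderStatistic

variable {ι α : Type*} {s : Set ι} {k : ℕ}

theorem exists_mem_le_ncard_setOf_le [LinearOrder α] (f : ι → α) {t : Set ι} (hs : s.Finite)
    (hts : t ⊆ s) (hk : 0 < k) (hkt : k ≤ t.ncard) :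
    ∃ j ∈ t, k ≤ {l ∈ s | f l ≤ f j}.ncard := by
  have ht : t.Nonempty := (ncard_pos (hs.subset hts)).1 (hk.trans_le hkt)
  obtain ⟨j, hj, hmax⟩ := t.exists_max_image f (hs.subset hts) ht
  exact ⟨j, hj, hkt.trans <|
    ncard_le_ncard (fun l hl ↦ ⟨hts hl, hmax l hl⟩) (hs.subset (sep_subset _ _))⟩

variable [ConditionallyCompleteLinearOrder α] {f : ι → α}

/-- The `k`-th smallest value of `f` on `s`, counted with multiplicity and starting from `k = 1`:
the least threshold below which `f` takes at least `k` values on `s`. It is a junk value unless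
`0 < k ≤ s.ncard`. -/
noncomputable def kthSmallest (s : Set ι) (f : ι → α) (k : ℕ) : α :=
  sInf {r | k ≤ {j ∈ s | f j ≤ r}.ncard}

theorem isLeast_kthSmallest (hs : s.Finite) (hk : 0 < k) (hks : k ≤ s.ncard) :
    IsLeast {r | k ≤ {j ∈ s | f j ≤ r}.ncard} (kthSmallest s f k) := by
  have hfin : {j ∈ s | k ≤ {l ∈ s | f l ≤ f j}.ncard}.Finite := hs.subset (sep_subset _ _)
  obtain ⟨j, ⟨-, hj⟩, hmin⟩ := exists_min_image _ f hfin
    (exists_mem_le_ncard_setOf_le f hs Subset.rfl hk hks)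
  have hleast : IsLeast {r | k ≤ {j ∈ s | f j ≤ r}.ncard} (f j) := by
    refine ⟨hj, fun r hr ↦ ?_⟩
    obtain ⟨l, ⟨hls, hlr⟩, hl⟩ := exists_mem_le_ncard_setOf_le f hs (sep_subset _ _) hk hr
    exact (hmin l ⟨hls, hl⟩).trans hlr
  rwa [kthSmallest, hleast.csInf_eq]

theorem le_ncard_setOf_le_kthSmallest (hs : s.Finite) (hk : 0 < k) (hks : k ≤ s.ncard) :
    k ≤ {j ∈ s | f j ≤ kthSmallest s f k}.ncard :=
  (isLeast_kthSmallest hs hk hks).1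

theorem ncard_setOf_lt_kthSmallest_lt (hs : s.Finite) (hk : 0 < k) :
    {j ∈ s | f j < kthSmallest s f k}.ncard < k := by
  by_contra! hcard
  have hks : k ≤ s.ncard := hcard.trans (ncard_le_ncard (sep_subset _ _) hs)
  obtain ⟨j, ⟨-, hlt⟩, hj⟩ := exists_mem_le_ncard_setOf_le f hs (sep_subset _ _) hk hcard
  exact hlt.not_ge ((isLeast_kthSmallest hs hk hks).2 hj)

end OrderStatistic

section Cones

open NormedSpace (normalize normalize_zero_eq_zero norm_smul_normalize norm_normalize_eq_one_iff)

variable {E : Type*} [NormedAddCommGroup E] [NormedSpace ℝ E]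

theorem norm_normalize_le_one (v : E) : ‖normalize v‖ ≤ 1 := by
  rcases eq_or_ne v 0 with rfl | hv
  · simp
  · exact (norm_normalize_eq_one_iff.2 hv).le

theorem norm_sub_lt_of_norm_normalize_sub_lt_one {v w : E} (hw : w ≠ 0) (hvw : ‖v‖ ≤ ‖w‖)
    (hdir : ‖normalize w - normalize v‖ < 1) : ‖w - v‖ < ‖w‖ := by
  have hw_one : ‖normalize w‖ = 1 := norm_normalize_eq_one_iff.2 hw
  have hv : v ≠ 0 := by
    rintro rfl
    rw [normalize_zero_eq_zero, sub_zero, hw_one] at hdir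
    exact lt_irrefl _ hdir
  have hsplit : w - v = (‖w‖ - ‖v‖) • normalize w + ‖v‖ • (normalize w - normalize v) := by
    rw [smul_sub, sub_smul, norm_smul_normalize, norm_smul_normalize]
    abel
  calc ‖w - v‖
      ≤ ‖(‖w‖ - ‖v‖) • normalize w‖ + ‖‖v‖ • (normalize w - normalize v)‖ :=
        hsplit ▸ norm_add_le _ _
    _ = (‖w‖ - ‖v‖) + ‖v‖ * ‖normalize w - normalize v‖ := by
        rw [norm_smul, norm_smul, hw_one, mul_one, Real.norm_of_nonneg (sub_nonneg.2 hvw),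
          norm_norm]
    _ < (‖w‖ - ‖v‖) + ‖v‖ * 1 := by gcongr
    _ = ‖w‖ := by ring

theorem exists_finset_forall_closedBall_dist_lt {X : Type*} [PseudoMetricSpace X] [ProperSpace X]
    (c : X) (R : ℝ) {ε : ℝ} (hε : 0 < ε) :
    ∃ S : Finset X, ∀ u ∈ closedBall c R, ∃ v ∈ S, dist u v < ε := by
  obtain ⟨t, -, ht, hcover⟩ := finite_cover_balls_of_compact (isCompact_closedBall c R) hε
  refine ⟨ht.toFinset, fun u hu ↦ ?_⟩
  simpa only [Finite.mem_toFinset, mem_iUnion₂, mem_ball, exists_prop] using hcover hu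

variable {ι : Type*} [Fintype ι] {z : ι → E} {D : ι → ℝ} {y : ℕ}

open Classical in
theorem card_filter_cone_le (hD : ∀ i, 0 < D i)
    (hcard : ∀ i, {k | k ≠ i ∧ dist (z i) (z k) < D i}.ncard < y) (p c : E) :
    #{i | dist (z i) p ≤ D i ∧ dist (normalize (z i - p)) c < 1 / 2} ≤ y := by
  set cone : Finset ι := {i | dist (z i) p ≤ D i ∧ dist (normalize (z i - p)) c < 1 / 2}
  rcases cone.eq_empty_or_nonempty with hempty | hne
  · simp [hempty]
  obtain ⟨i, hi, hfarthest⟩ := cone.exists_max_image (fun i ↦ ‖z i - p‖) hne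
  have hclose : ∀ k ∈ cone, dist (z i) (z k) < D i := by
    intro k hk
    obtain ⟨hiD, hic⟩ := (Finset.mem_filter.1 hi).2
    obtain ⟨-, hkc⟩ := (Finset.mem_filter.1 hk).2
    rw [dist_eq_norm] at hiD
    rw [dist_eq_norm, ← sub_sub_sub_cancel_right _ _ p]
    rcases eq_or_ne (z i - p) 0 with hip | hip
    · have hkp : z k - p = 0 := by simpa [hip] using hfarthest k hk
      simpa [hip, hkp] using hD i
    · refine (norm_sub_lt_of_norm_normalize_sub_lt_one hip (hfarthest k hk) ?_).trans_le hiD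
      rw [← dist_eq_norm]
      linarith [dist_triangle_right (normalize (z i - p)) (normalize (z k - p)) c]
  have herase : ((cone.erase i : Finset ι) : Set ι) ⊆ {k | k ≠ i ∧ dist (z i) (z k) < D i} :=
    fun k hk ↦ ⟨Finset.ne_of_mem_erase hk, hclose k (Finset.mem_of_mem_erase hk)⟩
  have hle := ncard_le_ncard herase (toFinite _)
  rw [ncard_coe_finset, Finset.card_erase_of_mem hi] at hle
  have := hcard i
  lia

theorem card_filter_dist_le_le_card_mul {S : Finset E}
    (hS : ∀ u ∈ closedBall (0 : E) 1, ∃ c ∈ S, dist u c < 1 / 2) (hD : ∀ i, 0 < D i)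
    (hcard : ∀ i, {k | k ≠ i ∧ dist (z i) (z k) < D i}.ncard < y) (p : E) :
    #{i | dist (z i) p ≤ D i} ≤ #S * y := by
  classical
  have hcover : ({i | dist (z i) p ≤ D i} : Finset ι) ⊆
      S.biUnion fun c ↦ {i | dist (z i) p ≤ D i ∧ dist (normalize (z i - p)) c < 1 / 2} := by
    intro i hi
    obtain ⟨c, hc, hic⟩ := hS (normalize (z i - p)) (by simpa using norm_normalize_le_one _)
    exact Finset.mem_biUnion.2
      ⟨c, hc, Finset.mem_filter.2 ⟨Finset.mem_univ i, (Finset.mem_filter.1 hi).2, hic⟩⟩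
  exact (Finset.card_le_card hcover).trans <|
    Finset.card_biUnion_le_card_mul _ _ _ fun c _ ↦ card_filter_cone_le hD hcard p c

end Cones

section Windows

variable {ι κ α : Type*}

theorem card_le_encard_of_forall_inter_nonempty {A : Set α} {W : κ → Set α}
    (hW : Pairwise (Function.onFun Disjoint W)) {T : Finset κ}
    (hA : ∀ k ∈ T, (A ∩ W k).Nonempty) : (#T : ℕ∞) ≤ A.encard := by
  rcases T.eq_empty_or_nonempty with rfl | ⟨k₀, hk₀⟩
  · simp
  have : Nonempty α := (hA k₀ hk₀).to_type
  choose! g hg using hA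
  rw [← encard_coe_eq_coe_finsetCard]
  refine encard_le_encard_of_injOn (f := g) (fun k hk ↦ (hg k hk).1) fun k hk l hl hkl ↦ ?_
  by_contra hne
  exact (hW hne).notMem_of_mem_left (hg k hk).2 (hkl ▸ (hg l hl).2)

open Classical in
theorem card_mul_le_sum_encard {A : ι → Set α} {W : κ → Set α}
    (hW : Pairwise (Function.onFun Disjoint W)) {s : Finset ι} {T : Finset κ} {w : ℕ}
    (hcard : ∀ k ∈ T, w ≤ #{j ∈ s | (A j ∩ W k).Nonempty}) :
    ((#T * w : ℕ) : ℕ∞) ≤ ∑ j ∈ s, (A j).encard := by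
  have hcount : #T * w ≤ ∑ j ∈ s, #{k ∈ T | (A j ∩ W k).Nonempty} :=
    calc #T * w ≤ ∑ k ∈ T, #{j ∈ s | (A j ∩ W k).Nonempty} := T.card_nsmul_le_sum _ _ hcard
      _ = ∑ j ∈ s, #{k ∈ T | (A j ∩ W k).Nonempty} :=
        (Finset.sum_card_bipartiteAbove_eq_sum_card_bipartiteBelow
          fun j k ↦ (A j ∩ W k).Nonempty).symm
  calc ((#T * w : ℕ) : ℕ∞) ≤ ((∑ j ∈ s, #{k ∈ T | (A j ∩ W k).Nonempty} : ℕ) : ℕ∞) :=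
        mod_cast hcount
    _ = ∑ j ∈ s, (#{k ∈ T | (A j ∩ W k).Nonempty} : ℕ∞) := Nat.cast_sum _ _
    _ ≤ ∑ j ∈ s, (A j).encard := Finset.sum_le_sum fun j _ ↦
        card_le_encard_of_forall_inter_nonempty hW fun _ hk ↦ (Finset.mem_filter.1 hk).2

/-- The `k`-th of the consecutive half-open time windows of length `r` that start at time `a`,
counting from `k = 0`. -/
def timeWindow (a r : ℝ) (k : ℕ) : Set ℝ :=
  Ioc (a + k * r) (a + (k + 1 : ℕ) * r)

variable {a b r : ℝ} {k : ℕ}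

theorem pairwise_disjoint_timeWindow (hr : 0 ≤ r) :
    Pairwise (Function.onFun Disjoint (timeWindow a r)) :=
  Monotone.pairwise_disjoint_on_Ioc_succ (f := fun k : ℕ ↦ a + k * r) fun _ _ hkl ↦ by
    dsimp only
    gcongr

theorem timeWindow_subset_Icc (hr : 0 < r) (hk : k < ⌊(b - a) / r⌋₊) :
    timeWindow a r k ⊆ Icc a b := by
  have hend : ((k + 1 : ℕ) : ℝ) * r ≤ b - a :=
    (le_div_iff₀ hr).1 ((Nat.le_floor_iff' k.succ_ne_zero).1 hk)
  have hstart : 0 ≤ (k : ℝ) * r := by positivity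
  exact fun s hs ↦ ⟨by linarith [hs.1], by linarith [hs.2]⟩

theorem end_mem_timeWindow (hr : 0 < r) : a + (k + 1 : ℕ) * r ∈ timeWindow a r k :=
  right_mem_Ioc.2 (by gcongr; exact k.lt_succ_self)

end Windows

section Schedules

variable {ι M : Type*} [PseudoMetricSpace M]

/-- The `x`-separation of entity `i` in a configuration `z` of entities of radius `ρ` in an
arbitrary metric space; it generalizes `xSep`. -/
noncomputable def separation (ρ : ℝ) (z : ι → M) (x : ℕ) (i : ι) : ℝ :=
  kthSmallest {i}ᶜ (fun j ↦ dist (z i) (z j) - 2 * ρ) x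

/-- The uncertainty region of a stationary entity in an arbitrary metric space. It generalizes
`uRegion`, but is given as the intersection of the regions that the individual past queries allow,
which is the ball of the latest query, or the whole space if there is none. -/
def uncertaintyRegion (ρ : ℝ) (z : M) (Q : Set ℝ) (t : ℝ) : Set M :=
  {q | ∀ s ∈ Q, s ≤ t → dist q z ≤ ρ + (t - s)}

theorem xSep_eq_separation {d n : ℕ} (ρ : ℝ) (z : Fin n → EuclideanSpace ℝ (Fin d)) (x : ℕ)
    (i : Fin n) : xSep ρ z x i = separation ρ z x i :=
  rfl

theorem uRegion_eq_uncertaintyRegion {d : ℕ} (ρ : ℝ) (z : EuclideanSpace ℝ (Fin d)) (Q : Set ℝ)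
    (t : ℝ) : uRegion ρ z Q t = uncertaintyRegion ρ z Q t := by
  ext q
  by_cases hne : (Q ∩ Iic t).Nonempty
  · have hbdd : BddAbove (Q ∩ Iic t) := ⟨t, fun _ hs ↦ hs.2⟩
    calc q ∈ uRegion ρ z Q t
        ↔ sSup (Q ∩ Iic t) ≤ ρ + t - dist q z := by
          rw [uRegion, if_pos hne, mem_closedBall]
          constructor <;> intro h <;> linarith
      _ ↔ ∀ s ∈ Q ∩ Iic t, s ≤ ρ + t - dist q z := csSup_le_iff hbdd hne
      _ ↔ q ∈ uncertaintyRegion ρ z Q t := by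
          refine ⟨fun h s hs hst ↦ ?_, fun h s hs ↦ ?_⟩
          · linarith [h s ⟨hs, hst⟩]
          · linarith [h s hs.1 hs.2]
  · simp only [uRegion, if_neg hne, mem_univ, true_iff]
    exact fun s hs hst ↦ absurd ⟨s, hs, hst⟩ hne

variable {ρ : ℝ} {z : ι → M} {x y : ℕ} {i : ι}

theorem ncard_setOf_dist_lt_separation_lt [Finite ι] (hy : 0 < y) (i : ι) :
    {j | j ≠ i ∧ dist (z i) (z j) < 2 * ρ + separation ρ z y i}.ncard < y := by
  simp only [← sub_lt_iff_lt_add']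
  exact ncard_setOf_lt_kthSmallest_lt (toFinite {i}ᶜ) hy

variable [Fintype ι]

/-- The entities at separation at most the `y`-separation of `i` from `i`, including `i` itself. -/
noncomputable def neighbors (ρ : ℝ) (z : ι → M) (y : ℕ) (i : ι) : Finset ι :=
  {j | dist (z i) (z j) ≤ 2 * ρ + separation ρ z y i}

theorem mem_neighbors {j : ι} :
    j ∈ neighbors ρ z y i ↔ dist (z i) (z j) ≤ 2 * ρ + separation ρ z y i :=
  Finset.mem_filter_univ j

theorem lt_card_neighbors (hy : 0 < y) (hyn : y < Fintype.card ι)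
    (hsep : 0 ≤ 2 * ρ + separation ρ z y i) : y < #(neighbors ρ z y i) := by
  classical
  have hcompl : y ≤ ({i}ᶜ : Set ι).ncard := by
    rw [ncard_compl, ncard_singleton, Nat.card_eq_fintype_card]
    lia
  have hself : i ∈ neighbors ρ z y i := mem_neighbors.2 (by rwa [dist_self])
  calc y ≤ {j ∈ ({i}ᶜ : Set ι) | dist (z i) (z j) - 2 * ρ ≤ separation ρ z y i}.ncard :=
        le_ncard_setOf_le_kthSmallest (toFinite _) hy hcompl
    _ ≤ (((neighbors ρ z y i).erase i : Finset ι) : Set ι).ncard :=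
        ncard_le_ncard fun j ⟨hji, hj⟩ ↦
          Finset.mem_erase.2 ⟨hji, mem_neighbors.2 (sub_le_iff_le_add'.1 hj)⟩
    _ < #(neighbors ρ z y i) := by
        rw [ncard_coe_finset]
        exact Finset.card_erase_lt_of_mem hself

variable {Q : ι → Set ℝ}

theorem exists_mem_Ioc_of_notMem_uncertaintyRegion {w q : M} {A : Set ℝ} {t r : ℝ}
    (hdist : dist q w ≤ ρ + r) (hq : q ∉ uncertaintyRegion ρ w A t) :
    (A ∩ Ioc (t - r) t).Nonempty := by
  simp only [uncertaintyRegion, mem_ofPred_eq, not_forall, not_le] at hq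
  obtain ⟨s, hsA, hst, hs⟩ := hq
  exact ⟨s, hsA, by linarith, hst⟩

open Classical in
theorem le_card_queried_neighbors (hy : 0 < y) (hyn : y < Fintype.card ι)
    (hsep : 0 ≤ 2 * ρ + separation ρ z y i) {t : ℝ}
    (hply : {j | z i ∈ uncertaintyRegion ρ (z j) (Q j) t}.ncard ≤ x) :
    y + 1 - x ≤ #{j ∈ neighbors ρ z y i |
      (Q j ∩ Ioc (t - (ρ + separation ρ z y i)) t).Nonempty} := by
  set queried : ι → Prop := fun j ↦ (Q j ∩ Ioc (t - (ρ + separation ρ z y i)) t).Nonempty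
  have hunqueried : ((neighbors ρ z y i).filter (¬ queried ·) : Set ι) ⊆
      {j | z i ∈ uncertaintyRegion ρ (z j) (Q j) t} := by
    intro j hj
    obtain ⟨hj, hnot⟩ := Finset.mem_filter.1 hj
    by_contra hmem
    exact hnot <| exists_mem_Ioc_of_notMem_uncertaintyRegion
      (by linarith [mem_neighbors.1 hj]) hmem
  have hle := (ncard_le_ncard hunqueried).trans hply
  rw [ncard_coe_finset] at hle
  have := (neighbors ρ z y i).card_filter_add_card_filter_not queried
  have := lt_card_neighbors hy hyn hsep
  lia

theorem floor_mul_le_sum_encard_neighbors {a b : ℝ} (hρ : 0 ≤ ρ) (hy : 0 < y)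
    (hyn : y < Fintype.card ι) (hr : 0 < ρ + separation ρ z y i)
    (hply : ∀ t ∈ Icc a b, ∀ q, {j | q ∈ uncertaintyRegion ρ (z j) (Q j) t}.ncard ≤ x) :
    ((⌊(b - a) / (ρ + separation ρ z y i)⌋₊ * (y + 1 - x) : ℕ) : ℕ∞) ≤
      ∑ j ∈ neighbors ρ z y i, (Q j ∩ Icc a b).encard := by
  classical
  set r := ρ + separation ρ z y i
  rw [← Finset.card_range ⌊(b - a) / r⌋₊]
  refine card_mul_le_sum_encard (pairwise_disjoint_timeWindow (a := a) hr.le) fun k hk ↦ ?_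
  have hsubset := timeWindow_subset_Icc hr (Finset.mem_range.1 hk)
  have hend := hsubset (end_mem_timeWindow hr)
  have hIoc : Ioc (a + (k + 1 : ℕ) * r - r) (a + (k + 1 : ℕ) * r) = timeWindow a r k := by
    rw [timeWindow]
    push_cast
    ring_nf
  rw [← hIoc] at hsubset ⊢
  simp only [inter_assoc, inter_eq_right.2 hsubset]
  exact le_card_queried_neighbors hy hyn (by linarith) (hply _ hend (z i))

end Schedules

section QueryBound

variable {ι E : Type*} [Fintype ι] [NormedAddCommGroup E] [NormedSpace ℝ E] {ρ : ℝ} {z : ι → E}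
  {x y : ℕ} {S : Finset E}

theorem card_filter_mem_neighbors_le [DecidableEq ι]
    (hS : ∀ u ∈ closedBall (0 : E) 1, ∃ c ∈ S, dist u c < 1 / 2) (hy : 0 < y)
    (hsep : ∀ i, 0 < 2 * ρ + separation ρ z y i) (j : ι) :
    #{i | j ∈ neighbors ρ z y i} ≤ #S * y := by
  simpa only [mem_neighbors] using
    card_filter_dist_le_le_card_mul hS hsep (ncard_setOf_dist_lt_separation_lt hy) (z j)

theorem sum_floor_mul_le_mul_sum_encard {Q : ι → Set ℝ} {a b : ℝ}
    (hS : ∀ u ∈ closedBall (0 : E) 1, ∃ c ∈ S, dist u c < 1 / 2)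
    (hρ : 0 ≤ ρ) (hy : 0 < y) (hyn : y < Fintype.card ι)
    (hr : ∀ i, 0 < ρ + separation ρ z y i)
    (hply : ∀ t ∈ Icc a b, ∀ q, {j | q ∈ uncertaintyRegion ρ (z j) (Q j) t}.ncard ≤ x) :
    (((∑ i, ⌊(b - a) / (ρ + separation ρ z y i)⌋₊) * (y + 1 - x) : ℕ) : ℕ∞) ≤
      (#S * y : ℕ) * ∑ j, (Q j ∩ Icc a b).encard := by
  classical
  have hsep : ∀ i, 0 < 2 * ρ + separation ρ z y i := fun i ↦ by linarith [hr i]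
  calc (((∑ i, ⌊(b - a) / (ρ + separation ρ z y i)⌋₊) * (y + 1 - x) : ℕ) : ℕ∞)
      = ∑ i, ((⌊(b - a) / (ρ + separation ρ z y i)⌋₊ * (y + 1 - x) : ℕ) : ℕ∞) := by
        rw [Finset.sum_mul, Nat.cast_sum]
    _ ≤ ∑ i, ∑ j ∈ neighbors ρ z y i, (Q j ∩ Icc a b).encard :=
        Finset.sum_le_sum fun i _ ↦ floor_mul_le_sum_encard_neighbors hρ hy hyn (hr i) hply
    _ = ∑ j, ∑ i with j ∈ neighbors ρ z y i, (Q j ∩ Icc a b).encard :=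
        Finset.sum_comm' fun i j ↦ by simp
    _ = ∑ j, (#{i | j ∈ neighbors ρ z y i} : ℕ∞) * (Q j ∩ Icc a b).encard := by
        simp only [Finset.sum_const, nsmul_eq_mul]
    _ ≤ ∑ j, (#S * y : ℕ) * (Q j ∩ Icc a b).encard := by
        gcongr with j
        exact card_filter_mem_neighbors_le hS hy hsep j
    _ = (#S * y : ℕ) * ∑ j, (Q j ∩ Icc a b).encard := (Finset.mul_sum _ _ _).symm

theorem sum_le_two_mul_sum_floor {v : ι → ℝ} (hv : 2 * (Fintype.card ι : ℝ) ≤ ∑ i, v i) :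
    ∑ i, v i ≤ 2 * ((∑ i, ⌊v i⌋₊ : ℕ) : ℝ) := by
  have hfloor : ∑ i, v i ≤ ((∑ i, ⌊v i⌋₊ : ℕ) : ℝ) + Fintype.card ι :=
    calc ∑ i, v i ≤ ∑ i, ((⌊v i⌋₊ : ℝ) + 1) :=
          Finset.sum_le_sum fun i _ ↦ (Nat.lt_floor_add_one (v i)).le
      _ = ((∑ i, ⌊v i⌋₊ : ℕ) : ℝ) + Fintype.card ι := by
          simp [Finset.sum_add_distrib]
  linarith

theorem ofReal_div_le_toENNReal {u c : ℕ} {N : ℕ∞} (hc : 0 < c) (h : (u : ℕ∞) ≤ c * N) :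
    ENNReal.ofReal (u / c) ≤ N := by
  rw [ENNReal.ofReal_div_of_pos (by positivity), ENNReal.ofReal_natCast, ENNReal.ofReal_natCast]
  refine ENNReal.div_le_of_le_mul' ?_
  exact_mod_cast ENat.toENNReal_le.2 h

end QueryBound

theorem stmt9_general (E : Type*) [NormedAddCommGroup E] [NormedSpace ℝ E]
    [FiniteDimensional ℝ E] :
    ∃ K : ℝ, 0 < K ∧
      ∀ (ι : Type*) [Fintype ι] (ρ : ℝ) (z : ι → E) (x y : ℕ) (a b : ℝ) (Q : ι → Set ℝ),
        0 ≤ ρ → 0 < y → x ≤ y → y < Fintype.card ι →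
        (∀ i, 0 < ρ + separation ρ z y i) →
        2 * (Fintype.card ι : ℝ) ≤ (b - a) * ∑ i, 1 / (ρ + separation ρ z y i) →
        (∀ t ∈ Icc a b, ∀ q, {i | q ∈ uncertaintyRegion ρ (z i) (Q i) t}.ncard ≤ x) →
        ENNReal.ofReal
            ((((y : ℝ) - (x : ℝ) + 1) / (K * (y : ℝ))) *
              ((b - a) * ∑ i, 1 / (ρ + separation ρ z y i)))
          ≤ ∑ i, ((Q i ∩ Icc a b).encard : ℝ≥0∞) := by
  obtain ⟨S, hS⟩ := exists_finset_forall_closedBall_dist_lt (0 : E) 1 one_half_pos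
  obtain ⟨c, hc, -⟩ := hS 0 (mem_closedBall_self zero_le_one)
  have hSpos : 0 < #S := Finset.card_pos.2 ⟨c, hc⟩
  refine ⟨2 * #S, by positivity, fun ι _ ρ z x y a b Q hρ hy hxy hyn hr hlen hply ↦ ?_⟩
  have hcount := sum_floor_mul_le_mul_sum_encard hS hρ hy hyn hr hply
  have hdiv : (b - a) * ∑ i, 1 / (ρ + separation ρ z y i) =
      ∑ i, (b - a) / (ρ + separation ρ z y i) := by
    simp only [Finset.mul_sum, mul_one_div]
  rw [hdiv] at hlen ⊢
  have hfloor := sum_le_two_mul_sum_floor hlen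
  set L := ∑ i, (b - a) / (ρ + separation ρ z y i)
  set F := ∑ i, ⌊(b - a) / (ρ + separation ρ z y i)⌋₊
  have hw : ((y + 1 - x : ℕ) : ℝ) = y - x + 1 := by
    rw [Nat.cast_sub (by lia)]
    push_cast
    ring
  calc ENNReal.ofReal ((y - x + 1) / (2 * #S * y) * L)
      ≤ ENNReal.ofReal ((F * (y + 1 - x) : ℕ) / (#S * y : ℕ)) := by
        refine ENNReal.ofReal_le_ofReal ?_
        rw [← hw]
        calc ((y + 1 - x : ℕ) : ℝ) / (2 * #S * y) * L
            ≤ ((y + 1 - x : ℕ) : ℝ) / (2 * #S * y) * (2 * F) := by gcongr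
          _ = (F * (y + 1 - x) : ℕ) / (#S * y : ℕ) := by push_cast; field_simp
    _ ≤ ((∑ i, (Q i ∩ Icc a b).encard : ℕ∞) : ℝ≥0∞) :=
        ofReal_div_le_toENNReal (by positivity) hcount
    _ = ∑ i, ((Q i ∩ Icc a b).encard : ℝ≥0∞) := map_sum ENat.toENNRealRingHom _ _

theorem stmt9 (d : ℕ) (hd : 1 ≤ d) :
    ∃ K : ℝ, 0 < K ∧
      ∀ (n : ℕ) (ρ : ℝ) (z : Fin n → EuclideanSpace ℝ (Fin d)) (x y : ℕ)
        (a b : ℝ) (Q : Fin n → Set ℝ),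
        0 ≤ ρ →
        Function.Injective z →
        (∀ i j : Fin n, i ≠ j → 2 * ρ ≤ dist (z i) (z j)) →
        1 ≤ x → x < y → y ≤ n - 1 →
        (∀ i : Fin n, 0 < xSep ρ z y i) →
        a ≤ b →
        2 * (n : ℝ) ≤ (b - a) * ∑ i : Fin n, 1 / (ρ + xSep ρ z y i) →
        (∀ t ∈ Set.Icc a b, ∀ q : EuclideanSpace ℝ (Fin d),
          {i : Fin n | q ∈ uRegion ρ (z i) (Q i) t}.ncard ≤ x) →
        ENNReal.ofReal
            ((((y : ℝ) - (x : ℝ) + 1) / (K * (y : ℝ))) *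
              ((b - a) * ∑ i : Fin n, 1 / (ρ + xSep ρ z y i)))
          ≤ ∑ i : Fin n, ((Q i ∩ Set.Icc a b).encard : ℝ≥0∞) := by
  obtain ⟨K, hK, hbound⟩ := stmt9_general (EuclideanSpace ℝ (Fin d))
  refine ⟨K, hK, fun n ρ z x y a b Q hρ _ _ _ hxy hyn hsep _ hlen hply ↦ ?_⟩
  simp only [uRegion_eq_uncertaintyRegion, xSep_eq_separation] at *
  exact hbound (Fin n) ρ z x y a b Q hρ (by lia) hxy.le (by rw [Fintype.card_fin]; lia)
    (fun i ↦ by linarith [hsep i]) (by rwa [Fintype.card_fin]) hply
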